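/- arXiv:2201.11426 — 2 statements merged into one kernel-verified Lean document; each statement's English description precedes it below -/
import Mathlib

section
/- Let (T₀, T̃₀) be a joint pair of closed abstract Friedrichs operators on a complex Hilbert space H. Then: (i) there exists a pair (T₁|_V, T̃₁|_Ṽ) of mutually adjoint bijective realisations relative to (T₀, T̃₀); (ii) if ker T₁ ≠ {0} and ker T̃₁ ≠ {0}, then there exist uncountably many pairs of mutually adjoint bijective realisations relative to (T₀, T̃₀), whereas if ker T₁ = {0} or ker T̃₁ = {0}, then there is exactly one such pair, namely (T₁, T̃₀) when ker T₁ = {0} and (T₀, T̃₁) when ker T̃₁ = {0}. -/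
open LinearPMap
open scoped LinearPMap

noncomputable section

variable {H : Type*} [NormedAddCommGroup H] [InnerProductSpace ℂ H] [CompleteSpace H]

local notation "⟪" x ", " y "⟫" => @inner ℂ _ _ x y

/-- Conditions (T1)–(T2) for a pair of operators with common dense domain. -/
structure IsPreFriedrichsPair (T Tt : H →ₗ.[ℂ] H) : Prop where
  dom_eq : T.domain = Tt.domain
  dense' : Dense (T.domain : Set H)
  t1 : ∀ (φ : T.domain) (ψ : Tt.domain), ⟪T φ, (ψ : H)⟫ = ⟪(φ : H), Tt ψ⟫
  t2 : ∃ c : ℝ, 0 < c ∧ ∀ φ : (T + Tt).domain, ‖(T + Tt) φ‖ ≤ c * ‖(φ : H)‖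

/-- A joint pair of abstract Friedrichs operators: (T1)–(T3). -/
structure IsFriedrichsPair (T Tt : H →ₗ.[ℂ] H) extends IsPreFriedrichsPair T Tt : Prop where
  t3 : ∃ μ₀ : ℝ, 0 < μ₀ ∧ ∀ φ : (T + Tt).domain,
        2 * μ₀ * ‖(φ : H)‖ ^ 2 ≤ (⟪(T + Tt) φ, (φ : H)⟫).re

/-- `(T₁|_V, T̃₁|_Ṽ)` is a pair of mutually adjoint bijective realisations relative to the
closed pair `(T₀, T̃₀)`, where `T₁ := T̃₀*`, `T̃₁ := T₀*`: the domains lie between the minimal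
domain and the graph space, the two restrictions are mutually adjoint, and both are bijections
onto `H`. -/
def MABPair (T Tt : H →ₗ.[ℂ] H) (V Vt : Submodule ℂ H) : Prop :=
  T.domain ≤ V ∧ V ≤ (Tt†).domain ∧ Tt.domain ≤ Vt ∧ Vt ≤ (T†).domain ∧
  ((Tt†).domRestrict V)† = (T†).domRestrict Vt ∧
  ((T†).domRestrict Vt)† = (Tt†).domRestrict V ∧
  Function.Bijective (fun x : ((Tt†).domRestrict V).domain => ((Tt†).domRestrict V) x) ∧
  Function.Bijective (fun x : ((T†).domRestrict Vt).domain => ((T†).domRestrict Vt) x)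

/-!
By (T1) the forms of `T₀` and `T̃₀` have the same real part, so (T3) bounds both operators from
below and both have bounded left inverses `Q` and `Q̃`. The domains of mutually adjoint bijective
realisations arise as the ranges of `R` and `R*` for a bounded `R` with `R T₀ φ = φ` and
`R* T̃₀ ψ = ψ`, because the second identity says that `T̃₀* R f = f`. Such an `R` is
`Q P + Q̃* (1 - P)`, with `P` the orthogonal projection onto the closure of `ran T₀`.
If `x ∈ ker T₁` and `y ∈ ker T̃₁` are nonzero, then the operators `R + c ⟨y, ·⟩ x`, `c ∈ ℂ`, have
the same property and pairwise distinct ranges. If `ker T₁ = 0`, then a surjective restriction of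
`T₁` is `T₁` itself, and its adjoint is `T̃₀** = T̃₀`.
-/

section BoundedInverse

variable {𝕜 E F : Type*} [Ring 𝕜] [AddCommGroup E] [Module 𝕜 E] [AddCommGroup F] [Module 𝕜 F]

theorem domRestrict_domain_self (A : E →ₗ.[𝕜] F) : A.domRestrict A.domain = A :=
  LinearPMap.ext (by simp) fun _ _ _ ↦ domRestrict_apply rfl

variable [TopologicalSpace E] [TopologicalSpace F]

/-- `R` is an everywhere defined bounded inverse of the operator `A`, expressed by saying that the
graph of `A` consists of the pairs `(R y, y)`. -/
def IsBoundedInverse (A : E →ₗ.[𝕜] F) (R : F →L[𝕜] E) : Prop :=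
  ∀ x y, (x, y) ∈ A.graph ↔ R y = x

namespace IsBoundedInverse

variable {A B : E →ₗ.[𝕜] F} {R S : F →L[𝕜] E}

theorem operator_unique (hA : IsBoundedInverse A R) (hB : IsBoundedInverse B R) : A = B :=
  eq_of_eq_graph (by ext ⟨x, y⟩; rw [hA, hB])

theorem inverse_unique (hR : IsBoundedInverse A R) (hS : IsBoundedInverse A S) : R = S := by
  ext y
  exact ((hS _ y).1 ((hR _ y).2 rfl)).symm

theorem bijective (h : IsBoundedInverse A R) : Function.Bijective fun x : A.domain ↦ A x := by
  have hRA (x : A.domain) : R (A x) = x := (h _ _).1 (A.mem_graph x)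
  refine ⟨fun x x' hxx' ↦ Subtype.ext ?_, fun y ↦ ?_⟩
  · rw [← hRA x, ← hRA x']
    exact congrArg R hxx'
  · obtain ⟨x, -, hx⟩ := (mem_graph_iff A).1 ((h (R y) y).2 rfl)
    exact ⟨x, hx⟩

end IsBoundedInverse

end BoundedInverse

section HilbertSpace

variable {𝕜 E F : Type*} [RCLike 𝕜]
variable [NormedAddCommGroup E] [InnerProductSpace 𝕜 E]
variable [NormedAddCommGroup F] [InnerProductSpace 𝕜 F]

theorem norm_le_of_mul_norm_sq_le_re_inner {m : ℝ} (hm : 0 < m) {x y : E}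
    (h : m * ‖x‖ ^ 2 ≤ RCLike.re (inner 𝕜 y x)) : ‖x‖ ≤ m⁻¹ * ‖y‖ := by
  rcases (norm_nonneg x).eq_or_lt with hx | hx
  · rw [← hx]
    positivity
  · have hxy : m * ‖x‖ * ‖x‖ ≤ ‖y‖ * ‖x‖ := by
      calc m * ‖x‖ * ‖x‖ = m * ‖x‖ ^ 2 := by ring
        _ ≤ RCLike.re (inner 𝕜 y x) := h
        _ ≤ ‖y‖ * ‖x‖ := re_inner_le_norm y x
    exact (le_inv_mul_iff₀ hm).2 (le_of_mul_le_mul_right hxy hx)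

theorem coe_mem_orthogonal_range_of_adjoint_eq_zero [CompleteSpace E] {T : E →ₗ.[𝕜] F}
    (hd : Dense (T.domain : Set E)) {y : T†.domain} (hy : T† y = 0) :
    (y : F) ∈ (LinearMap.range T.toFun)ᗮ := by
  rw [Submodule.mem_orthogonal']
  rintro _ ⟨φ, rfl⟩
  calc inner 𝕜 (y : F) (T φ) = inner 𝕜 (T† y) (φ : E) := (adjoint_isFormalAdjoint hd y φ).symm
    _ = 0 := by rw [hy, inner_zero_left]

theorem submodule_adjoint_adjoint_of_isClosed [CompleteSpace E] [CompleteSpace F]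
    {g : Submodule 𝕜 (E × F)} (hg : IsClosed (g : Set (E × F))) : g.adjoint.adjoint = g := by
  let G : Submodule 𝕜 (WithLp 2 (E × F)) := g.comap (WithLp.linearEquiv 2 𝕜 (E × F)).toLinearMap
  have hG : IsClosed (G : Set (WithLp 2 (E × F))) :=
    hg.preimage (WithLp.prod_continuous_ofLp 2 E F)
  have : CompleteSpace G := hG.completeSpace_coe
  ext ⟨x, y⟩
  rw [Submodule.mem_adjoint_iff]
  constructor
  · intro h
    suffices WithLp.toLp 2 (x, y) ∈ Gᗮᗮ by rwa [Submodule.orthogonal_orthogonal] at this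
    rw [Submodule.mem_orthogonal]
    intro w hw
    have hw_adjoint : (w.snd, -w.fst) ∈ g.adjoint := by
      rw [Submodule.mem_adjoint_iff]
      intro a b hab
      have hab_w := (Submodule.mem_orthogonal _ _).1 hw (WithLp.toLp 2 (a, b)) hab
      rw [WithLp.prod_inner_apply] at hab_w
      simpa [add_comm] using hab_w
    have hxy := h _ _ hw_adjoint
    rw [inner_neg_left] at hxy
    calc inner 𝕜 w (WithLp.toLp 2 (x, y)) = inner 𝕜 w.fst x + inner 𝕜 w.snd y := rfl
      _ = 0 := by linear_combination -hxy
  · intro hxy a b hab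
    have hba := (Submodule.mem_adjoint_iff g (a, b)).1 hab x y hxy
    rw [← inner_conj_symm, ← inner_conj_symm a, ← _root_.map_sub, ← neg_sub, hba, neg_zero,
      _root_.map_zero]

theorem adjoint_adjoint_of_isClosed [CompleteSpace E] [CompleteSpace F] {T : E →ₗ.[𝕜] F}
    (hT : T.IsClosed) (hd : Dense (T.domain : Set E)) (hd' : Dense (T†.domain : Set F)) :
    T†† = T := by
  apply eq_of_eq_graph
  rw [adjoint_graph_eq_graph_adjoint hd', adjoint_graph_eq_graph_adjoint hd,
    submodule_adjoint_adjoint_of_isClosed hT]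

theorem exists_leftInverse_of_norm_le [CompleteSpace E] [CompleteSpace F] {T : E →ₗ.[𝕜] F} {C : ℝ}
    (hC : ∀ φ : T.domain, ‖(φ : E)‖ ≤ C * ‖T φ‖) :
    ∃ Q : F →L[𝕜] E, ∀ φ : T.domain, Q (T φ) = φ := by
  let K := (LinearMap.range T.toFun).topologicalClosure
  have hTK (φ : T.domain) : T φ ∈ K := Submodule.le_topologicalClosure _ ⟨φ, rfl⟩
  let S : T.domain →ₗ[𝕜] K := T.toFun.codRestrict K hTK
  have hS : DenseRange S := by
    rw [DenseRange, Subtype.dense_iff, ← Set.range_comp]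
    exact subset_rfl
  refine ⟨T.domain.subtype.extendOfNorm S ∘L K.orthogonalProjectionOnto, fun φ ↦ ?_⟩
  have hproj : K.orthogonalProjectionOnto (T φ) = S φ :=
    Submodule.orthogonalProjectionOnto_mem_subspace_eq_self (S φ)
  rw [ContinuousLinearMap.comp_apply, hproj, LinearMap.extendOfNorm_eq hS ⟨C, hC⟩,
    Submodule.subtype_apply]

theorem IsBoundedInverse.adjoint [CompleteSpace E] [CompleteSpace F] {A : E →ₗ.[𝕜] F}
    {R : F →L[𝕜] E} (h : IsBoundedInverse A R) (hd : Dense (A.domain : Set E)) :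
    IsBoundedInverse A† R.adjoint := by
  intro x y
  rw [adjoint_graph_eq_graph_adjoint hd, Submodule.mem_adjoint_iff]
  simp only [h _ _, sub_eq_zero]
  constructor
  · intro hxy
    refine ext_inner_left 𝕜 fun b ↦ ?_
    rw [ContinuousLinearMap.adjoint_inner_right]
    exact (hxy _ b rfl).symm
  · rintro rfl _ b rfl
    exact ContinuousLinearMap.adjoint_inner_right R b y

/-- `R` is a left inverse of `T` and its adjoint is a left inverse of `S`. For densely defined
`S` these `R` are the bounded inverses of the restrictions of `S†` that extend `T`. -/
structure IsJointLeftInverse [CompleteSpace E] [CompleteSpace F] (T : E →ₗ.[𝕜] F)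
    (S : F →ₗ.[𝕜] E) (R : F →L[𝕜] E) : Prop where
  apply_left : ∀ φ : T.domain, R (T φ) = φ
  adjoint_apply_right : ∀ ψ : S.domain, R.adjoint (S ψ) = ψ

section JointLeftInverse

variable [CompleteSpace E] [CompleteSpace F] {T : E →ₗ.[𝕜] F} {S : F →ₗ.[𝕜] E}

theorem exists_isJointLeftInverse {C C' : ℝ} (hTS : T.IsFormalAdjoint S)
    (hT : ∀ φ : T.domain, ‖(φ : E)‖ ≤ C * ‖T φ‖) (hS : ∀ ψ : S.domain, ‖(ψ : F)‖ ≤ C' * ‖S ψ‖) :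
    ∃ R : F →L[𝕜] E, IsJointLeftInverse T S R := by
  obtain ⟨Q, hQ⟩ := exists_leftInverse_of_norm_le hT
  obtain ⟨Q', hQ'⟩ := exists_leftInverse_of_norm_le hS
  let K := (LinearMap.range T.toFun).topologicalClosure
  have hQK (ψ : S.domain) {f : F} (hf : f ∈ K) : inner 𝕜 (S ψ) (Q f) = inner 𝕜 (ψ : F) f := by
    have hclosed : IsClosed {f : F | inner 𝕜 (S ψ) (Q f) = inner 𝕜 (ψ : F) f} :=
      isClosed_eq (by fun_prop) (by fun_prop)
    refine closure_minimal ?_ hclosed hf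
    rintro _ ⟨φ, rfl⟩
    exact (congrArg (inner 𝕜 (S ψ)) (hQ φ)).trans (hTS.symm ψ φ)
  refine ⟨Q ∘L K.starProjection + Q'.adjoint ∘L (1 - K.starProjection),
    fun φ ↦ ?_, fun ψ ↦ ext_inner_right 𝕜 fun f ↦ ?_⟩
  · have hφ : K.starProjection (T φ) = T φ :=
      Submodule.starProjection_eq_self_iff.2 (Submodule.le_topologicalClosure _ ⟨φ, rfl⟩)
    simp [hφ, hQ]
  · have hf : K.starProjection f ∈ K := Submodule.starProjection_apply_mem K f
    rw [ContinuousLinearMap.adjoint_inner_left]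
    calc inner 𝕜 (S ψ) (Q (K.starProjection f) + Q'.adjoint (f - K.starProjection f))
        = inner 𝕜 (ψ : F) (K.starProjection f) + inner 𝕜 (ψ : F) (f - K.starProjection f) := by
          rw [inner_add_right, hQK ψ hf, ContinuousLinearMap.adjoint_inner_right, hQ']
      _ = inner 𝕜 (ψ : F) f := by rw [← inner_add_right, add_sub_cancel]

namespace IsJointLeftInverse

variable {R R' : F →L[𝕜] E}

theorem symm (h : IsJointLeftInverse T S R) : IsJointLeftInverse S T R.adjoint :=
  ⟨h.adjoint_apply_right, by simpa using h.apply_left⟩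

theorem domain_le_range (h : IsJointLeftInverse T S R) : T.domain ≤ R.range :=
  fun x hx ↦ ⟨_, h.apply_left ⟨x, hx⟩⟩

theorem mem_graph_adjoint (h : IsJointLeftInverse T S R) (hS : Dense (S.domain : Set F)) (f : F) :
    (R f, f) ∈ S†.graph := by
  rw [adjoint_graph_eq_graph_adjoint hS, Submodule.mem_adjoint_iff]
  intro a b hab
  obtain ⟨ψ, rfl, rfl⟩ := (mem_graph_iff S).1 hab
  rw [← ContinuousLinearMap.adjoint_inner_left, h.adjoint_apply_right, sub_self]

theorem range_le_adjoint_domain (h : IsJointLeftInverse T S R) (hS : Dense (S.domain : Set F)) :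
    R.range ≤ S†.domain := by
  rintro _ ⟨f, rfl⟩
  exact mem_domain_of_mem_graph (h.mem_graph_adjoint hS f)

theorem isBoundedInverse_domRestrict (h : IsJointLeftInverse T S R)
    (hS : Dense (S.domain : Set F)) : IsBoundedInverse (S†.domRestrict R.range) R := by
  have hRf (f : F) : (R f, f) ∈ (S†.domRestrict R.range).graph := by
    obtain ⟨x, hx, hxf⟩ := (mem_graph_iff _).1 (h.mem_graph_adjoint hS f)
    have hxR : (x : E) ∈ R.range := ⟨f, hx.symm⟩
    exact (mem_graph_iff _).2 ⟨⟨x, hxR, x.2⟩, hx, (domRestrict_apply rfl).trans hxf⟩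
  refine fun x y ↦ ⟨fun hxy ↦ ?_, ?_⟩
  · obtain ⟨⟨_, ⟨f, rfl⟩, _⟩, rfl, -⟩ := (mem_graph_iff _).1 hxy
    exact congrArg R (mem_graph_snd_inj _ hxy (hRf f) rfl)
  · rintro rfl
    exact hRf y

theorem eq_of_range_eq (h : IsJointLeftInverse T S R) (h' : IsJointLeftInverse T S R')
    (hS : Dense (S.domain : Set F)) (hRR' : R.range = R'.range) : R = R' :=
  (h.isBoundedInverse_domRestrict hS).inverse_unique
    (hRR' ▸ h'.isBoundedInverse_domRestrict hS)

theorem adjoint_domRestrict_range (h : IsJointLeftInverse T S R) (hT : Dense (T.domain : Set E))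
    (hS : Dense (S.domain : Set F)) :
    (S†.domRestrict R.range)† = T†.domRestrict R.adjoint.range := by
  have hd : Dense ((S†.domRestrict R.range).domain : Set E) :=
    hT.mono (le_inf h.domain_le_range (h.domain_le_range.trans (h.range_le_adjoint_domain hS)))
  exact ((h.isBoundedInverse_domRestrict hS).adjoint hd).operator_unique
    (h.symm.isBoundedInverse_domRestrict hT)

theorem add_rankOne (h : IsJointLeftInverse T S R) {x : E} {y : F}
    (hx : x ∈ (LinearMap.range S.toFun)ᗮ) (hy : y ∈ (LinearMap.range T.toFun)ᗮ) :
    IsJointLeftInverse T S (R + InnerProductSpace.rankOne 𝕜 x y) := by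
  have hxS (ψ : S.domain) : inner 𝕜 x (S ψ) = 0 := (Submodule.mem_orthogonal' _ _).1 hx _ ⟨ψ, rfl⟩
  have hyT (φ : T.domain) : inner 𝕜 y (T φ) = 0 := (Submodule.mem_orthogonal' _ _).1 hy _ ⟨φ, rfl⟩
  exact ⟨fun φ ↦ by simp [h.apply_left, hyT], fun ψ ↦ by simp [h.adjoint_apply_right, hxS]⟩

end IsJointLeftInverse

end JointLeftInverse

end HilbertSpace

section FriedrichsPair

variable {G : Type*} [NormedAddCommGroup G] [InnerProductSpace ℂ G] {T Tt : G →ₗ.[ℂ] G}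

theorem IsFriedrichsPair.symm (h : IsFriedrichsPair T Tt) : IsFriedrichsPair Tt T where
  dom_eq := h.dom_eq.symm
  dense' := h.dom_eq ▸ h.dense'
  t1 := IsFormalAdjoint.symm h.t1
  t2 := add_comm T Tt ▸ h.t2
  t3 := add_comm T Tt ▸ h.t3

theorem IsFriedrichsPair.exists_norm_le (h : IsFriedrichsPair T Tt) :
    ∃ C : ℝ, ∀ φ : T.domain, ‖(φ : G)‖ ≤ C * ‖T φ‖ := by
  obtain ⟨m, hm, hcoercive⟩ := h.t3
  refine ⟨m⁻¹, fun φ ↦ norm_le_of_mul_norm_sq_le_re_inner (𝕜 := ℂ) hm ?_⟩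
  let ψ : Tt.domain := ⟨φ, h.dom_eq ▸ φ.2⟩
  have hsum : 2 * m * ‖(φ : G)‖ ^ 2 ≤ (⟪T φ + Tt ψ, (φ : G)⟫).re := hcoercive ⟨φ, φ.2, ψ.2⟩
  have hre : (⟪Tt ψ, (φ : G)⟫).re = (⟪T φ, (φ : G)⟫).re :=
    (inner_re_symm (𝕜 := ℂ) _ _).trans (congrArg Complex.re (h.t1 φ ψ).symm)
  rw [inner_add_left, Complex.add_re, hre] at hsum
  exact (by linarith : m * ‖(φ : G)‖ ^ 2 ≤ (⟪T φ, (φ : G)⟫).re)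

end FriedrichsPair

section Realisations

variable {T Tt : H →ₗ.[ℂ] H} {V Vt : Submodule ℂ H}

theorem mabPair_comm : MABPair T Tt V Vt ↔ MABPair Tt T Vt V := by
  unfold MABPair
  tauto

theorem IsJointLeftInverse.mabPair {R : H →L[ℂ] H} (h : IsJointLeftInverse T Tt R)
    (hd : Dense (T.domain : Set H)) (hdt : Dense (Tt.domain : Set H)) :
    MABPair T Tt R.range R.adjoint.range :=
  ⟨h.domain_le_range, h.range_le_adjoint_domain hdt,
    h.symm.domain_le_range, h.symm.range_le_adjoint_domain hd,
    h.adjoint_domRestrict_range hd hdt, by simpa using h.symm.adjoint_domRestrict_range hdt hd,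
    (h.isBoundedInverse_domRestrict hdt).bijective,
    (h.symm.isBoundedInverse_domRestrict hd).bijective⟩

theorem IsJointLeftInverse.not_countable_setOf_mabPair {R : H →L[ℂ] H}
    (h : IsJointLeftInverse T Tt R)
    (hd : Dense (T.domain : Set H)) (hdt : Dense (Tt.domain : Set H)) {x y : H}
    (hx : x ∈ (LinearMap.range Tt.toFun)ᗮ) (hx₀ : x ≠ 0)
    (hy : y ∈ (LinearMap.range T.toFun)ᗮ) (hy₀ : y ≠ 0) :
    ¬ Set.Countable {p : Submodule ℂ H × Submodule ℂ H | MABPair T Tt p.1 p.2} := by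
  let N (c : ℂ) : H →L[ℂ] H := R + InnerProductSpace.rankOne ℂ (c • x) y
  have hN (c : ℂ) : IsJointLeftInverse T Tt (N c) := h.add_rankOne (Submodule.smul_mem _ c hx) hy
  have hN_injective : Function.Injective N := fun c d hcd ↦ by
    have hsmul := add_left_cancel hcd
    rw [_root_.map_smul, _root_.map_smul] at hsmul
    exact smul_left_injective ℂ (InnerProductSpace.rankOne_ne_zero hx₀ hy₀) hsmul
  let pair (c : ℂ) : Submodule ℂ H × Submodule ℂ H := ((N c).range, (N c).adjoint.range)
  have hpair_injective : Function.Injective pair := fun c d hcd ↦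
    hN_injective ((hN c).eq_of_range_eq (hN d) hdt (congrArg Prod.fst hcd))
  intro hcountable
  exact not_countable_complex ((hcountable.preimage_of_injOn hpair_injective.injOn).mono
    fun c _ ↦ (hN c).mabPair hd hdt)

theorem MABPair.eq_adjoint_domain (h : MABPair T Tt V Vt)
    (hker : ∀ x : (Tt†).domain, (Tt†) x = 0 → (x : H) = 0) : V = (Tt†).domain := by
  obtain ⟨-, hV, -, -, -, -, ⟨-, hsurj⟩, -⟩ := h
  refine le_antisymm hV fun x hx ↦ ?_
  obtain ⟨⟨v, hvV, hv⟩, hvx⟩ := hsurj ((Tt†) ⟨x, hx⟩)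
  have hvx' : (Tt†) ⟨v, hv⟩ = (Tt†) ⟨x, hx⟩ := (domRestrict_apply rfl).symm.trans hvx
  have hsub : v - x = 0 := hker (⟨v, hv⟩ - ⟨x, hx⟩) (by rw [LinearPMap.map_sub, hvx', sub_self])
  exact sub_eq_zero.1 hsub ▸ hvV

theorem MABPair.eq_domain_of_left_eq (h : MABPair T Tt (Tt†).domain Vt)
    (hd : Dense (T.domain : Set H)) (hdt : Dense (Tt.domain : Set H)) (hTt : Tt.IsClosed) :
    Vt = Tt.domain := by
  obtain ⟨hTV, -, -, hVt, hadj, -⟩ := h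
  rw [domRestrict_domain_self, adjoint_adjoint_of_isClosed hTt hdt (hd.mono hTV)] at hadj
  rw [hadj, domRestrict_domain, inf_eq_left.2 hVt]

theorem mabPair_iff_of_ker_adjoint_eq_bot (hd : Dense (T.domain : Set H))
    (hdt : Dense (Tt.domain : Set H)) (hTt : Tt.IsClosed)
    (hex : ∃ V Vt : Submodule ℂ H, MABPair T Tt V Vt)
    (hker : ∀ x : (Tt†).domain, (Tt†) x = 0 → (x : H) = 0) :
    MABPair T Tt V Vt ↔ V = (Tt†).domain ∧ Vt = Tt.domain := by
  have unique {W Wt : Submodule ℂ H} (h : MABPair T Tt W Wt) :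
      W = (Tt†).domain ∧ Wt = Tt.domain := by
    obtain rfl := h.eq_adjoint_domain hker
    exact ⟨rfl, h.eq_domain_of_left_eq hd hdt hTt⟩
  refine ⟨unique, ?_⟩
  rintro ⟨rfl, rfl⟩
  obtain ⟨W, Wt, hW⟩ := hex
  obtain ⟨rfl, rfl⟩ := unique hW
  exact hW

end Realisations

theorem statement5_general (T Tt : H →ₗ.[ℂ] H) (hd : Dense (T.domain : Set H))
    (hdt : Dense (Tt.domain : Set H)) (hadj : T.IsFormalAdjoint Tt) {C Ct : ℝ}
    (hC : ∀ φ : T.domain, ‖(φ : H)‖ ≤ C * ‖T φ‖) (hCt : ∀ ψ : Tt.domain, ‖(ψ : H)‖ ≤ Ct * ‖Tt ψ‖)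
    (hT : T.IsClosed) (hTt : Tt.IsClosed) :
    (∃ V Vt : Submodule ℂ H, MABPair T Tt V Vt) ∧
    (((∃ x : (Tt†).domain, (Tt†) x = 0 ∧ (x : H) ≠ 0) ∧
      (∃ y : (T†).domain, (T†) y = 0 ∧ (y : H) ≠ 0)) →
        ¬ Set.Countable {p : Submodule ℂ H × Submodule ℂ H | MABPair T Tt p.1 p.2}) ∧
    ((∀ x : (Tt†).domain, (Tt†) x = 0 → (x : H) = 0) →
      (MABPair T Tt (Tt†).domain Tt.domain ∧
        ∀ V Vt : Submodule ℂ H, MABPair T Tt V Vt → V = (Tt†).domain ∧ Vt = Tt.domain)) ∧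
    ((∀ y : (T†).domain, (T†) y = 0 → (y : H) = 0) →
      (MABPair T Tt T.domain (T†).domain ∧
        ∀ V Vt : Submodule ℂ H, MABPair T Tt V Vt → V = T.domain ∧ Vt = (T†).domain)) := by
  obtain ⟨R, hR⟩ := exists_isJointLeftInverse hadj hC hCt
  have hex : ∃ V Vt : Submodule ℂ H, MABPair T Tt V Vt := ⟨_, _, hR.mabPair hd hdt⟩
  have hex' : ∃ Vt V : Submodule ℂ H, MABPair Tt T Vt V := ⟨_, _, hR.symm.mabPair hdt hd⟩
  refine ⟨hex, ?_, fun hker ↦ ?_, fun hker ↦ ?_⟩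
  · rintro ⟨⟨x, hx, hx₀⟩, ⟨y, hy, hy₀⟩⟩
    exact hR.not_countable_setOf_mabPair hd hdt
      (coe_mem_orthogonal_range_of_adjoint_eq_zero hdt hx) hx₀
      (coe_mem_orthogonal_range_of_adjoint_eq_zero hd hy) hy₀
  · simp [mabPair_iff_of_ker_adjoint_eq_bot hd hdt hTt hex hker]
  · simp [mabPair_comm (T := T), mabPair_iff_of_ker_adjoint_eq_bot hdt hd hT hex' hker, and_comm]

/-- For a joint pair `(T₀, T̃₀)` of closed abstract Friedrichs operators:
(i) there exists a pair of mutually adjoint bijective realisations; (ii) if both kernels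
`ker T₁`, `ker T̃₁` are nontrivial there are uncountably many such pairs, while if `ker T₁ = 0`
(resp. `ker T̃₁ = 0`) there is exactly one, namely `(T₁, T̃₀)` (resp. `(T₀, T̃₁)`). -/
theorem statement5 (T Tt : H →ₗ.[ℂ] H) (hF : IsFriedrichsPair T Tt)
    (hT : T.IsClosed) (hTt : Tt.IsClosed) :
    (∃ V Vt : Submodule ℂ H, MABPair T Tt V Vt) ∧
    (((∃ x : (Tt†).domain, (Tt†) x = 0 ∧ (x : H) ≠ 0) ∧
      (∃ y : (T†).domain, (T†) y = 0 ∧ (y : H) ≠ 0)) →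
        ¬ Set.Countable {p : Submodule ℂ H × Submodule ℂ H | MABPair T Tt p.1 p.2}) ∧
    ((∀ x : (Tt†).domain, (Tt†) x = 0 → (x : H) = 0) →
      (MABPair T Tt (Tt†).domain Tt.domain ∧
        ∀ V Vt : Submodule ℂ H, MABPair T Tt V Vt → V = (Tt†).domain ∧ Vt = Tt.domain)) ∧
    ((∀ y : (T†).domain, (T†) y = 0 → (y : H) = 0) →
      (MABPair T Tt T.domain (T†).domain ∧
        ∀ V Vt : Submodule ℂ H, MABPair T Tt V Vt → V = T.domain ∧ Vt = (T†).domain)) := by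
  obtain ⟨C, hC⟩ := hF.exists_norm_le
  obtain ⟨Ct, hCt⟩ := hF.symm.exists_norm_le
  exact statement5_general T Tt hF.dense' hF.symm.dense' hF.t1 hC hCt hT hTt
end
end

section
/- Let (T₀, T̃₀) be a joint pair of closed abstract Friedrichs operators on a complex Hilbert space H, and let V be a closed subspace of the graph space W (closed in the graph norm) with W₀ ⊆ V. Then T₁|_V : V → H is bijective if and only if V ∔ ker T₁ = W, i.e. V ∩ ker T₁ = {0} and V + ker T₁ = W. -/
open LinearPMap
open scoped LinearPMap

noncomputable section

variable {H : Type*} [NormedAddCommGroup H] [InnerProductSpace ℂ H] [CompleteSpace H]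

local notation "⟪" x ", " y "⟫" => @inner ℂ _ _ x y

/-- The kernel of a partially defined operator, as a submodule of the ambient space. -/
def pKer (f : H →ₗ.[ℂ] H) : Submodule ℂ H :=
  (LinearMap.ker f.toFun).map f.domain.subtype

/-!
The operator `T̃₀` is coercive, hence bounded below, so every functional `⟪f, ·⟫` on its domain
factors through its range and, by Hahn–Banach and Riesz, has the form `⟪u, T̃₀ ·⟫`; thus
`T₁ = T̃₀†` is surjective. The rest is linear algebra: the restriction of a surjective linear map
to a subspace is bijective exactly when the subspace is a complement of the kernel.
-/

section LinearAlgebra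

variable {R M N P : Type*} [Ring R] [AddCommGroup M] [AddCommGroup N] [AddCommGroup P]
  [Module R M] [Module R N] [Module R P]

theorem bijective_comp_iff_isCompl_range_ker {f : N →ₗ[R] P} (hf : Function.Surjective f)
    {i : M →ₗ[R] N} (hi : Function.Injective i) :
    Function.Bijective (f ∘ₗ i) ↔ IsCompl i.range f.ker := by
  have injective_iff : Function.Injective (f ∘ₗ i) ↔ Disjoint i.range f.ker := by
    rw [← LinearMap.ker_eq_bot, LinearMap.ker_comp, disjoint_iff, ← Submodule.map_comap_eq,
      (Submodule.map_injective_of_injective hi).eq_iff' (Submodule.map_bot i)]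
  have surjective_iff : Function.Surjective (f ∘ₗ i) ↔ Codisjoint i.range f.ker := by
    rw [← LinearMap.range_eq_top, LinearMap.range_comp,
      LinearMap.map_eq_top_iff (LinearMap.range_eq_top.mpr hf), codisjoint_iff]
  rw [Function.Bijective, injective_iff, surjective_iff, isCompl_iff]

theorem isCompl_submoduleOf_iff {V W : Submodule R M} (hVW : V ≤ W) (K : Submodule R W) :
    IsCompl (V.submoduleOf W) K ↔
      V ⊓ K.map W.subtype = ⊥ ∧ V ⊔ K.map W.subtype = W := by
  have map_injective := Submodule.map_injective_of_injective W.injective_subtype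
  have map_submoduleOf : (V.submoduleOf W).map W.subtype = V := by
    rw [Submodule.submoduleOf, Submodule.map_comap_subtype, inf_eq_right.mpr hVW]
  rw [isCompl_iff, disjoint_iff, codisjoint_iff, ← map_injective.eq_iff,
    ← map_injective.eq_iff (a := _ ⊔ _), Submodule.map_inf _ W.injective_subtype,
    Submodule.map_sup, map_submoduleOf, Submodule.map_bot, Submodule.map_subtype_top]

theorem bijective_domRestrict_iff {S : M →ₗ.[R] N} (hS : Function.Surjective S)
    {V : Submodule R M} (hV : V ≤ S.domain) :
    Function.Bijective (S.domRestrict V) ↔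
      V ⊓ S.toFun.ker.map S.domain.subtype = ⊥ ∧
        V ⊔ S.toFun.ker.map S.domain.subtype = S.domain := by
  have range_inclusion :
      (Submodule.inclusion (inf_le_right : V ⊓ S.domain ≤ S.domain)).range =
        V.submoduleOf S.domain := by
    rw [Submodule.range_inclusion, inf_eq_left.mpr hV, Submodule.submoduleOf]
  rw [← isCompl_submoduleOf_iff hV, ← range_inclusion]
  exact bijective_comp_iff_isCompl_range_ker hS (Submodule.inclusion_injective inf_le_right)

end LinearAlgebra

theorem exists_strongDual_apply_eq_of_antilipschitzWith {𝕜 E F : Type*} [RCLike 𝕜]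
    [NormedAddCommGroup E] [NormedSpace 𝕜 E] [SeminormedAddCommGroup F] [NormedSpace 𝕜 F]
    {f : E →ₗ[𝕜] F} {K : NNReal} (hf : AntilipschitzWith K f) (ℓ : StrongDual 𝕜 E) :
    ∃ L : StrongDual 𝕜 F, ∀ x, L (f x) = ℓ x := by
  let e : E ≃ₗ[𝕜] f.range := LinearEquiv.ofInjective f hf.injective
  have continuous_symm : Continuous e.symm :=
    (hf.codRestrict f.mem_range_self |>.to_rightInverse e.apply_symm_apply).continuous
  let ℓrange : StrongDual 𝕜 f.range := ⟨ℓ.toLinearMap ∘ₗ e.symm, ℓ.continuous.comp continuous_symm⟩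
  obtain ⟨L, hL, -⟩ := exists_extension_norm_eq f.range ℓrange
  exact ⟨L, fun x => (hL (e x)).trans (congrArg ℓ (e.symm_apply_apply x))⟩

section HilbertSpace

variable {𝕜 E F : Type*} [RCLike 𝕜] [NormedAddCommGroup E] [InnerProductSpace 𝕜 E]
  [NormedAddCommGroup F] [InnerProductSpace 𝕜 F]

theorem antilipschitzWith_of_le_re_inner {A : E →ₗ.[𝕜] E} {μ : ℝ} (hμ : 0 < μ)
    (hA : ∀ x : A.domain, μ * ‖(x : E)‖ ^ 2 ≤ RCLike.re (inner 𝕜 (A x) (x : E))) :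
    AntilipschitzWith μ⁻¹.toNNReal A.toFun := by
  refine AddMonoidHomClass.antilipschitz_of_bound A.toFun fun x => ?_
  rw [Real.coe_toNNReal _ (inv_nonneg.mpr hμ.le), le_inv_mul_iff₀ hμ]
  rcases (norm_nonneg x).eq_or_lt with norm_eq_zero | norm_pos
  · simp [← norm_eq_zero]
  · refine le_of_mul_le_mul_right ?_ norm_pos
    calc μ * ‖x‖ * ‖x‖ = μ * ‖(x : E)‖ ^ 2 := by rw [Submodule.coe_norm]; ring
      _ ≤ RCLike.re (inner 𝕜 (A x) (x : E)) := hA x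
      _ ≤ ‖A x‖ * ‖x‖ := re_inner_le_norm (A x) (x : E)

variable [CompleteSpace E] [CompleteSpace F]

theorem adjoint_surjective_of_antilipschitzWith {A : E →ₗ.[𝕜] F}
    (hdense : Dense (A.domain : Set E)) {K : NNReal} (hA : AntilipschitzWith K A.toFun) :
    Function.Surjective A† := by
  intro f
  obtain ⟨L, hL⟩ :=
    exists_strongDual_apply_eq_of_antilipschitzWith hA (innerSL 𝕜 f ∘L A.domain.subtypeL)
  let u : F := (InnerProductSpace.toDual 𝕜 F).symm L
  have hu (x : A.domain) : inner 𝕜 f (x : E) = inner 𝕜 u (A x) :=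
    (InnerProductSpace.toDual_symm_apply.trans (hL x)).symm
  exact ⟨⟨u, mem_adjoint_domain_of_exists u ⟨f, hu⟩⟩, adjoint_apply_eq hdense _ hu⟩

theorem statement14_general {A : E →ₗ.[𝕜] F} (hdense : Dense (A.domain : Set E))
    {K : NNReal} (hA : AntilipschitzWith K A.toFun) {V : Submodule 𝕜 F} (hV : V ≤ (A†).domain) :
    Function.Bijective ((A†).domRestrict V) ↔
      V ⊓ (A†).toFun.ker.map (A†).domain.subtype = ⊥ ∧
        V ⊔ (A†).toFun.ker.map (A†).domain.subtype = (A†).domain :=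
  bijective_domRestrict_iff (adjoint_surjective_of_antilipschitzWith hdense hA) hV

end HilbertSpace

theorem IsFriedrichsPair.exists_le_re_inner {E : Type*} [NormedAddCommGroup E]
    [InnerProductSpace ℂ E] {T Tt : E →ₗ.[ℂ] E} (hF : IsFriedrichsPair T Tt) :
    ∃ μ : ℝ, 0 < μ ∧ ∀ φ : Tt.domain, μ * ‖(φ : E)‖ ^ 2 ≤ (⟪Tt φ, (φ : E)⟫).re := by
  obtain ⟨μ, hμ, coercive⟩ := hF.t3
  refine ⟨μ, hμ, fun φ => ?_⟩
  have hφ : (φ : E) ∈ T.domain := hF.dom_eq.ge φ.2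
  have re_inner_T : (⟪T ⟨φ, hφ⟩, (φ : E)⟫).re = (⟪Tt φ, (φ : E)⟫).re := by
    rw [hF.t1 ⟨φ, hφ⟩ φ]
    exact inner_re_symm (𝕜 := ℂ) _ _
  have two_mul_le : 2 * μ * ‖(φ : E)‖ ^ 2 ≤ (⟪T ⟨φ, hφ⟩ + Tt φ, (φ : E)⟫).re :=
    coercive ⟨φ, hφ, φ.2⟩
  rw [inner_add_left, Complex.add_re, re_inner_T] at two_mul_le
  linarith

/-- For a joint pair `(T₀, T̃₀)` of closed abstract Friedrichs operators and a
subspace `V` of the graph space `W` containing `W₀` which is closed in the graph norm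
(equivalently, the graph of `T₁|_V` is closed), the restriction `T₁|_V : V → H` is bijective
iff `V ∔ ker T₁ = W`, i.e. `V ∩ ker T₁ = {0}` and `V + ker T₁ = W`. -/
theorem statement14 (T Tt : H →ₗ.[ℂ] H) (hF : IsFriedrichsPair T Tt)
    (hT : T.IsClosed) (hTt : Tt.IsClosed)
    (V : Submodule ℂ H) (hV₀ : T.domain ≤ V) (hVW : V ≤ (Tt†).domain)
    (hVClosed : IsClosed {p : H × H | p.1 ∈ V ∧ p ∈ (Tt†).graph}) :
    Function.Bijective
        (fun x : ((Tt†).domRestrict V).domain => ((Tt†).domRestrict V) x) ↔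
      (V ⊓ pKer (Tt†) = ⊥ ∧ V ⊔ pKer (Tt†) = (Tt†).domain) := by
  obtain ⟨μ, hμ, coercive⟩ := hF.exists_le_re_inner
  exact statement14_general (hF.dom_eq ▸ hF.dense')
    (antilipschitzWith_of_le_re_inner hμ coercive) hVW
end
end
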